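/- Let n ≥ 1, t, W, J, θ > 0, let d = (θ/n)·(1,…,1) ∈ ℝ^n, and let a ∈ [0,1]^n with transmissivity ρ = ρ(a). Then the LMMSE satisfies m(n,t,W,J,d,a) ≥ θ/(1 + θtρ/(n(W + Jρ))). In particular, for any mask (a ∈ [0,1]^n), if the exposure time satisfies t = o(n) then the LMMSE stays bounded below by θ(1 − o(1)), so an exposure time of order Ω(n) is necessary for nontrivial reconstruction of an i.i.d. scene. -/

import Mathlib

/-- Discrete Fourier transform of a real vector `a ∈ ℝ^n`:
`â_j = ∑_{i=0}^{n-1} a_i e^{-2πi·ij/n}`. -/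
noncomputable def dft {n : ℕ} (a : Fin n → ℝ) (j : Fin n) : ℂ :=
  ∑ i : Fin n, (a i : ℂ) *
    Complex.exp (-(2 * Real.pi * Complex.I * ((i : ℕ) : ℂ) * ((j : ℕ) : ℂ)) / (n : ℂ))

/-- Transmissivity `ρ(a) = (1/n) ∑ i, a i`. -/
noncomputable def transmissivity {n : ℕ} (a : Fin n → ℝ) : ℝ :=
  (1 / (n : ℝ)) * ∑ i : Fin n, a i

/-- LMMSE `m(n,t,W,J,d,a) = ∑_i 1/(1/d_i + γ|â_i|²)` with
`γ = t/(n(W+Jρ(a)))`. -/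
noncomputable def lmmse (n : ℕ) (t W J : ℝ) (d : Fin n → ℝ) (a : Fin n → ℝ) : ℝ :=
  ∑ i : Fin n,
    1 / (1 / d i + (t / (n * (W + J * transmissivity a))) * ‖dft a i‖ ^ 2)

/-- Optimal LMMSE `m*(n,t,W,J,d)`: infimum of the LMMSE over apertures `a ∈ [0,1]^n`. -/
noncomputable def lmmseOpt (n : ℕ) (t W J : ℝ) (d : Fin n → ℝ) : ℝ :=
  sInf {m | ∃ a : Fin n → ℝ, (∀ i, a i ∈ Set.Icc (0 : ℝ) 1) ∧ m = lmmse n t W J d a}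


lemma aux_dft_eq {n : ℕ} (hn : 1 ≤ n) (a : Fin n → ℝ) (j : Fin n) :
    dft a j = ∑ i : Fin n, (a i : ℂ) *
      (((Complex.exp (2 * Real.pi * Complex.I / n))⁻¹) ^ (i : ℕ)) ^ (j : ℕ) := by
  unfold dft
  refine Finset.sum_congr rfl fun i _ => ?_
  rw [← Complex.exp_neg, ← Complex.exp_nat_mul, ← Complex.exp_nat_mul]
  congr 2
  ring

lemma aux_conj_dft_eq {n : ℕ} (hn : 1 ≤ n) (a : Fin n → ℝ) (j : Fin n) :
    (starRingEnd ℂ) (dft a j) = ∑ i : Fin n, (a i : ℂ) *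
      ((Complex.exp (2 * Real.pi * Complex.I / n)) ^ (i : ℕ)) ^ (j : ℕ) := by
  rw [aux_dft_eq hn, map_sum]
  refine Finset.sum_congr rfl fun i _ => ?_
  have h : (starRingEnd ℂ) ((Complex.exp (2 * Real.pi * Complex.I / n))⁻¹)
      = Complex.exp (2 * Real.pi * Complex.I / n) := by
    rw [← Complex.exp_neg, ← Complex.exp_conj]
    congr 1
    have h2 : (starRingEnd ℂ) 2 = 2 := map_ofNat _ 2
    simp [Complex.conj_ofReal, h2]
    ring
  rw [map_mul, map_pow, map_pow, h, Complex.conj_ofReal]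

lemma aux_orth {n : ℕ} {ζ : ℂ} (hn : 1 ≤ n) (hζ : IsPrimitiveRoot ζ n) (i k : Fin n) :
    ∑ j : Fin n, (ζ⁻¹ ^ (i : ℕ)) ^ (j : ℕ) * (ζ ^ (k : ℕ)) ^ (j : ℕ)
      = if i = k then (n : ℂ) else 0 := by
  have h0 : ζ ≠ 0 := hζ.ne_zero (by omega)
  simp_rw [← mul_pow]
  rw [Fin.sum_univ_eq_sum_range (fun j => (ζ⁻¹ ^ (i : ℕ) * ζ ^ (k : ℕ)) ^ j) n]
  split_ifs with h
  · subst h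
    rw [← mul_pow, inv_mul_cancel₀ h0]
    simp
  · have h1 : ζ⁻¹ ^ (i : ℕ) * ζ ^ (k : ℕ) ≠ 1 := by
      intro h1
      apply h
      rw [inv_pow, inv_mul_eq_one₀ (pow_ne_zero _ h0)] at h1
      exact Fin.ext (hζ.pow_inj i.2 k.2 h1)
    rw [geom_sum_eq h1]
    have h2 : (ζ⁻¹ ^ (i : ℕ) * ζ ^ (k : ℕ)) ^ n = 1 := by
      rw [mul_pow, ← pow_mul, ← pow_mul, mul_comm _ n, mul_comm _ n, pow_mul, pow_mul,
        inv_pow, hζ.pow_eq_one]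
      simp
    rw [h2]; simp

lemma aux_parseval {n : ℕ} (hn : 1 ≤ n) (a : Fin n → ℝ) :
    ∑ j : Fin n, ‖dft a j‖ ^ 2 = n * ∑ i : Fin n, a i ^ 2 := by
  have hζ := Complex.isPrimitiveRoot_exp n (by omega)
  have key : ((∑ j : Fin n, ‖dft a j‖ ^ 2 : ℝ) : ℂ) = ((n * ∑ i : Fin n, a i ^ 2 : ℝ) : ℂ) := by
    push_cast
    simp_rw [← Complex.mul_conj', aux_conj_dft_eq hn, aux_dft_eq hn, Finset.sum_mul_sum]
    rw [Finset.sum_comm, Finset.mul_sum]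
    refine Finset.sum_congr rfl fun i _ => ?_
    rw [Finset.sum_comm]
    have : ∀ k : Fin n, ∑ j : Fin n,
        (a i : ℂ) * (((Complex.exp (2 * Real.pi * Complex.I / n))⁻¹) ^ (i : ℕ)) ^ (j : ℕ) *
        ((a k : ℂ) * ((Complex.exp (2 * Real.pi * Complex.I / n)) ^ (k : ℕ)) ^ (j : ℕ))
        = (a i : ℂ) * a k * (if i = k then (n : ℂ) else 0) := by
      intro k
      rw [← aux_orth hn hζ i k, Finset.mul_sum]
      refine Finset.sum_congr rfl fun j _ => ?_
      ring
    simp_rw [this]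
    simp
    ring
  exact_mod_cast key

lemma aux_main (n : ℕ) (hn : 1 ≤ n) (t W J θ : ℝ)
    (ht : 0 < t) (hW : 0 < W) (hJ : 0 < J) (hθ : 0 < θ)
    (a : Fin n → ℝ) (ha : ∀ i, a i ∈ Set.Icc (0 : ℝ) 1) :
    0 ≤ transmissivity a ∧
    θ / (1 + θ * t * transmissivity a / (n * (W + J * transmissivity a)))
      ≤ lmmse n t W J (fun _ => θ / n) a := by
  have hn0 : (0 : ℝ) < n := by exact_mod_cast hn
  have hs : ∑ i, a i = n * transmissivity a := by
    unfold transmissivity; field_simp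
  have hρ : 0 ≤ transmissivity a := by
    unfold transmissivity
    have := Finset.sum_nonneg (s := Finset.univ) fun i _ => (ha i).1
    positivity
  refine ⟨hρ, ?_⟩
  have hp := aux_parseval hn a
  have hsq : ∑ i, a i ^ 2 ≤ n * transmissivity a := by
    rw [← hs]
    refine Finset.sum_le_sum fun i _ => ?_
    have := ha i
    nlinarith [this.1, this.2]
  unfold lmmse
  generalize transmissivity a = ρ at *
  have hD : 0 < n * (W + J * ρ) := by positivity
  obtain ⟨γ, hγ⟩ : ∃ γ, γ = t / (n * (W + J * ρ)) := ⟨_, rfl⟩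
  have hγ0 : 0 < γ := by rw [hγ]; positivity
  have e : θ * t * ρ / (n * (W + J * ρ)) = θ * γ * ρ := by rw [hγ]; ring
  rw [e, ← hγ]
  have hx : ∀ i : Fin n, 0 < 1 / (θ / n) + γ * ‖dft a i‖ ^ 2 := fun i => by positivity
  have hcs := Finset.sq_sum_div_le_sum_sq_div Finset.univ (fun _ : Fin n => (1 : ℝ))
    (fun i _ => hx i)
  simp only [one_pow] at hcs
  refine le_trans ?_ hcs
  rw [Finset.sum_add_distrib, ← Finset.mul_sum, hp]
  simp only [Finset.sum_const, Finset.card_univ, Fintype.card_fin, nsmul_eq_mul, mul_one]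
  have e2 : θ / (1 + θ * γ * ρ) = (n : ℝ) ^ 2 / (n * (1 / (θ / n)) + γ * (n * (n * ρ))) := by
    field_simp
  rw [e2]
  have h3 : 0 ≤ ∑ i, a i ^ 2 := Finset.sum_nonneg fun i _ => sq_nonneg _
  gcongr

/-- For an i.i.d. scene prior `d = (θ/n)·𝟙` and any mask `a ∈ [0,1]^n`,
`m(n,t,W,J,d,a) ≥ θ/(1 + θtρ/(n(W+Jρ)))`.  In particular, for every `ε > 0` there is
`c > 0` such that whenever the exposure time satisfies `t ≤ cn`, the LMMSE of any mask
stays above `θ(1-ε)`: exposure time `Ω(n)` is necessary for nontrivial reconstruction. -/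
theorem mask_needs_long_exposure (n : ℕ) (hn : 1 ≤ n) (t W J θ : ℝ)
    (ht : 0 < t) (hW : 0 < W) (hJ : 0 < J) (hθ : 0 < θ)
    (a : Fin n → ℝ) (ha : ∀ i, a i ∈ Set.Icc (0 : ℝ) 1)
    (ρ : ℝ) (hρ : ρ = transmissivity a) :
    θ / (1 + θ * t * ρ / (n * (W + J * ρ))) ≤ lmmse n t W J (fun _ => θ / n) a ∧
      ∀ ε : ℝ, 0 < ε → ∃ c : ℝ, 0 < c ∧
        ∀ (n' : ℕ) (t' : ℝ) (a' : Fin n' → ℝ), 1 ≤ n' → 0 < t' → t' ≤ c * n' →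
          (∀ i, a' i ∈ Set.Icc (0 : ℝ) 1) →
          θ * (1 - ε) ≤ lmmse n' t' W J (fun _ => θ / n') a' := by
  subst hρ
  refine ⟨(aux_main n hn t W J θ ht hW hJ hθ a ha).2, fun ε hε => ?_⟩
  refine ⟨ε * J / θ, by positivity, fun n' t' a' hn' ht' hc ha' => ?_⟩
  obtain ⟨h0, h1⟩ := aux_main n' hn' t' W J θ ht' hW hJ hθ a' ha'
  refine le_trans ?_ h1
  generalize transmissivity a' = ρ at *
  have hn0 : (0 : ℝ) < n' := by exact_mod_cast hn'
  have hx0 : 0 ≤ θ * t' * ρ / (n' * (W + J * ρ)) := by positivity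
  have hx : θ * t' * ρ / (n' * (W + J * ρ)) ≤ ε := by
    rw [div_le_iff₀ (by positivity)]
    have h2 : θ * t' ≤ ε * J * n' := by
      calc θ * t' ≤ θ * (ε * J / θ * n') := by gcongr
        _ = ε * J * n' := by field_simp
    have h3 := mul_le_mul_of_nonneg_right h2 h0
    have h4 : 0 < ε * n' * W := by positivity
    nlinarith
  generalize θ * t' * ρ / (n' * (W + J * ρ)) = x at *
  rw [le_div_iff₀ (by positivity)]
  have : (1 - ε) * (1 + x) ≤ 1 := by nlinarith
  nlinarith
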